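/- Let X ∈ ES and let γ ∨ (⋀_{i∈NI}⟨A_i⟩φ_i → ⋁_{j∈PI}⟨B_j⟩ψ_j) be a standard disjunction. If the X-derivability-reduction-condition holds — namely (1) ⊢_XL γ, or (2) both: (a) if D ∉ X, then there are NI' ⊆ NI and j ∈ PI such that NI' is X-neat, ⋃_{i∈NI'} A_i ⊆ B_j, and ⊢_XL ⋀_{i∈NI'}φ_i → ψ_j; and (b) if D ∈ X, then there are NI' ⊆ NI and j ∈ PI such that NI' is X-neat, ⋃_{i∈NI'} A_i ⊆ B_j, and ⊢_XL ⋀_{i∈NI'}φ_i → (ψ_j ∨ ⋁_{k∈PI₀}ψ_k), where PI₀ = { j ∈ PI : B_j = AG } — then ⊢_XL γ ∨ (⋀_{i∈NI}⟨A_i⟩φ_i → ⋁_{j∈PI}⟨B_j⟩ψ_j). -/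

import Mathlib

/-!
Writing `H` for the conjunction of the premises `⟨A_i⟩φ_i`, the whole argument takes place among the
formulas `χ` with `⊢ H → χ`, which are closed under modal monotonicity (`Deriv.coal_mono`).

* If `N'` is neat, its premises merge into `⟨⋃ A_i⟩ ⋀ φ_i` (`Deriv.coal_bigConj`). Two coalitions are
  merged by A-IA when `I ∈ X`. When `I ∉ X`, neatness makes one of the two coalitions empty, and
  `⟨∅⟩φ ∧ ⟨C⟩ψ → ⟨C⟩(φ ∧ ψ)` is derivable in every system (`Deriv.coal_empty_and`). The merging
  starts from `⟨∅⟩⊤`, which comes from A-Ser or, for nonempty `N'`, from conditional necessitation.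
* Since `⋃ A_i ⊆ B_j`, A-MC and monotonicity turn this into `⟨B_j⟩ψ_j`, or, when `D ∈ X`, into
  `⟨B_j⟩(ψ_j ∨ ⋁_{k ∈ PI₀} ψ_k)`.
* In the latter case A-Det splits the disjunction into `⟨B_j⟩ψ_j` and `⟨AG⟩ψ_k` with `B_k = AG`; the
  empty disjunction left over at the end is refuted by A-NAAA (`Deriv.coal_univ_bigDisj`).
-/

namespace CL

/-- The language Φ of coalition logic over a set of agents, with atomic
propositions drawn from ℕ (a countable set). -/
inductive Formula (Agent : Type) : Type
  | top : Formula Agent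
  | atom : ℕ → Formula Agent
  | neg : Formula Agent → Formula Agent
  | and : Formula Agent → Formula Agent → Formula Agent
  | coal : Set Agent → Formula Agent → Formula Agent

namespace Formula

variable {Agent : Type}

def bot : Formula Agent := neg top

def or (φ ψ : Formula Agent) : Formula Agent := neg (and (neg φ) (neg ψ))

def imp (φ ψ : Formula Agent) : Formula Agent := or (neg φ) ψ

def iff (φ ψ : Formula Agent) : Formula Agent := and (imp φ ψ) (imp ψ φ)

end Formula

/-- The three frame properties: seriality, independence of agents, determinism.
`ES` is represented by `Set P3`, the eight subsets of {S, I, D}. -/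
inductive P3 : Type
  | S | I | D
deriving DecidableEq
/-- Propositional evaluation of a formula, treating coalition formulas and
atoms as propositional atoms (valued by `v`). -/
def Formula.evalProp {Agent : Type} (v : Formula Agent → Bool) : Formula Agent → Bool
  | .top => true
  | .atom n => v (.atom n)
  | .neg φ => !(φ.evalProp v)
  | .and φ ψ => φ.evalProp v && ψ.evalProp v
  | .coal C φ => v (.coal C φ)

/-- A propositional tautology. -/
def Tautology {Agent : Type} (φ : Formula Agent) : Prop :=
  ∀ v : Formula Agent → Bool, φ.evalProp v = true

/-- Derivability in the axiomatic system XL, for X ∈ ES (X : Set P3).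
MCL is the case X = ∅ and CL is the case X = {S, I, D}. -/
inductive Deriv {Agent : Type} (X : Set P3) : Formula Agent → Prop
  | taut {φ : Formula Agent} : Tautology φ → Deriv X φ
  | naaa (C : Set Agent) : Deriv X (Formula.neg (Formula.coal C Formula.bot))
  | mg (C : Set Agent) (φ ψ : Formula Agent) :
      Deriv X ((Formula.coal ∅ (φ.imp ψ)).imp ((Formula.coal C φ).imp (Formula.coal C ψ)))
  | mc {C D : Set Agent} (h : C ⊆ D) (φ : Formula Agent) :
      Deriv X ((Formula.coal C φ).imp (Formula.coal D φ))
  | ser (h : P3.S ∈ X) (C : Set Agent) : Deriv X (Formula.coal C Formula.top)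
  | ia (h : P3.I ∈ X) {C D : Set Agent} (hCD : C ∩ D = ∅) (φ ψ : Formula Agent) :
      Deriv X (((Formula.coal C φ).and (Formula.coal D ψ)).imp
        (Formula.coal (C ∪ D) (φ.and ψ)))
  | det (h : P3.D ∈ X) (C : Set Agent) (φ ψ : Formula Agent) :
      Deriv X ((Formula.coal C (φ.or ψ)).imp
        ((Formula.coal C φ).or (Formula.coal Set.univ ψ)))
  | mp {φ ψ : Formula Agent} : Deriv X (φ.imp ψ) → Deriv X φ → Deriv X ψ
  | cn {φ : Formula Agent} (C : Set Agent) (ψ : Formula Agent) :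
      Deriv X φ → Deriv X ((Formula.coal C ψ).imp (Formula.coal ∅ φ))
def bigConj {Agent : Type} (l : List (Formula Agent)) : Formula Agent :=
  l.foldr Formula.and Formula.top

def bigDisj {Agent : Type} (l : List (Formula Agent)) : Formula Agent :=
  l.foldr Formula.or Formula.bot

inductive IsLiteral {Agent : Type} : Formula Agent → Prop
  | pos (n : ℕ) : IsLiteral (Formula.atom n)
  | neg (n : ℕ) : IsLiteral (Formula.neg (Formula.atom n))

/-- An elementary disjunction: a disjunction of propositional literals. -/
inductive IsElemDisj {Agent : Type} : Formula Agent → Prop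
  | lit {φ : Formula Agent} : IsLiteral φ → IsElemDisj φ
  | or {φ ψ : Formula Agent} : IsElemDisj φ → IsElemDisj ψ → IsElemDisj (φ.or ψ)

/-- An elementary conjunction: a conjunction of propositional literals. -/
inductive IsElemConj {Agent : Type} : Formula Agent → Prop
  | lit {φ : Formula Agent} : IsLiteral φ → IsElemConj φ
  | and {φ ψ : Formula Agent} : IsElemConj φ → IsElemConj ψ → IsElemConj (φ.and ψ)

/-- The data of a standard disjunction γ ∨ (⋀_{i∈NI}⟨A_i⟩φ_i → ⋁_{j∈PI}⟨B_j⟩ψ_j):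
NI is represented by `Fin n` (possibly empty) and PI by `Fin (m+1)` (nonempty);
(1) if NI ≠ ∅ then ⟨A_i⟩φ_i = ⟨∅⟩⊤ for some i ∈ NI, and (2) ⟨B_0⟩ψ_0 = ⟨AG⟩⊥. -/
structure StdDisj (Agent : Type) where
  γ : Formula Agent
  hγ : IsElemDisj γ
  n : ℕ
  m : ℕ
  A : Fin n → Set Agent
  φ : Fin n → Formula Agent
  B : Fin (m + 1) → Set Agent
  ψ : Fin (m + 1) → Formula Agent
  hNI : n ≠ 0 → ∃ i : Fin n, A i = ∅ ∧ φ i = Formula.top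
  hB0 : B 0 = Set.univ
  hψ0 : ψ 0 = Formula.bot

namespace StdDisj

variable {Agent : Type} (d : StdDisj Agent)

/-- The formula γ ∨ (⋀_{i∈NI}⟨A_i⟩φ_i → ⋁_{j∈PI}⟨B_j⟩ψ_j). -/
def toFormula : Formula Agent :=
  d.γ.or
    ((bigConj ((List.finRange d.n).map fun i => Formula.coal (d.A i) (d.φ i))).imp
      (bigDisj ((List.finRange (d.m + 1)).map fun j => Formula.coal (d.B j) (d.ψ j))))

/-- N ⊆ NI is X-neat. -/
def Neat (X : Set P3) (N : Finset (Fin d.n)) : Prop :=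
  (∀ i ∈ N, ∀ i' ∈ N, i ≠ i' → d.A i ∩ d.A i' = ∅) ∧
    (P3.S ∉ X → N.Nonempty) ∧
    (P3.I ∉ X → ∀ i ∈ N, ∀ i' ∈ N, d.A i ≠ ∅ → d.A i' ≠ ∅ → i = i')

/-- The set of basic positive indices `PI₀ = { j ∈ PI : B_j = AG }`. -/
noncomputable def PI0 : Finset (Fin (d.m + 1)) :=
  letI := Classical.decPred fun j : Fin (d.m + 1) => d.B j = Set.univ
  Finset.univ.filter fun j => d.B j = Set.univ

end StdDisj

namespace Formula

variable {Agent : Type} (v : Formula Agent → Bool)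

@[simp] theorem evalProp_or (φ ψ : Formula Agent) :
    (φ.or ψ).evalProp v = (φ.evalProp v || ψ.evalProp v) := by
  simp [Formula.or, Formula.evalProp]

@[simp] theorem evalProp_imp (φ ψ : Formula Agent) :
    (φ.imp ψ).evalProp v = (!φ.evalProp v || ψ.evalProp v) := by
  simp [Formula.imp, Formula.evalProp]

@[simp] theorem evalProp_bot : (bot : Formula Agent).evalProp v = false := rfl

@[simp] theorem evalProp_neg (φ : Formula Agent) : (φ.neg).evalProp v = !φ.evalProp v := rfl

@[simp] theorem evalProp_and (φ ψ : Formula Agent) :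
    (φ.and ψ).evalProp v = (φ.evalProp v && ψ.evalProp v) := rfl

theorem evalProp_bigConj {l : List (Formula Agent)} :
    (bigConj l).evalProp v = true ↔ ∀ φ ∈ l, φ.evalProp v = true := by
  induction l with
  | nil => simp [bigConj, Formula.evalProp]
  | cons a l ih => simpa [bigConj] using fun _ => ih

theorem evalProp_bigDisj {l : List (Formula Agent)} :
    (bigDisj l).evalProp v = true ↔ ∃ φ ∈ l, φ.evalProp v = true := by
  induction l with
  | nil => simp [bigDisj]
  | cons a l ih => simpa [bigDisj] using or_congr_right ih

end Formula

namespace Deriv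

open Formula

variable {Agent : Type} {X : Set P3} {H a b c e : Formula Agent}

theorem conseq₁ (ha : Deriv X a)
    (h : ∀ v : Formula Agent → Bool, a.evalProp v = true → b.evalProp v = true) : Deriv X b := by
  refine .mp (.taut fun v => ?_) ha
  have := h v
  cases h1 : a.evalProp v <;> simp_all

theorem conseq₂ (ha : Deriv X a) (hb : Deriv X b)
    (h : ∀ v : Formula Agent → Bool, a.evalProp v = true → b.evalProp v = true →
      c.evalProp v = true) : Deriv X c := by
  refine .mp (conseq₁ (b := b.imp c) ha fun v h1 => ?_) hb
  have := h v h1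
  cases h2 : b.evalProp v <;> simp_all

theorem imp_trans (h₁ : Deriv X (a.imp b)) (h₂ : Deriv X (b.imp c)) : Deriv X (a.imp c) := by
  refine conseq₂ h₁ h₂ fun v => ?_
  simp only [evalProp_imp]
  cases a.evalProp v <;> cases b.evalProp v <;> simp

/-- Modus ponens under a hypothesis `H`. -/
theorem imp_mp (h₁ : Deriv X (H.imp (a.imp b))) (h₂ : Deriv X (H.imp a)) : Deriv X (H.imp b) := by
  refine conseq₂ h₁ h₂ fun v => ?_
  simp only [evalProp_imp]
  cases H.evalProp v <;> cases a.evalProp v <;> simp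

theorem imp_and (h₁ : Deriv X (H.imp a)) (h₂ : Deriv X (H.imp b)) :
    Deriv X (H.imp (a.and b)) := by
  refine conseq₂ h₁ h₂ fun v => ?_
  simp only [evalProp_imp, evalProp_and]
  cases H.evalProp v <;> simp +contextual

/-- Monotonicity in the goal: `⊢ φ → ψ` gives `⊢ ⟨C⟩φ → ⟨C⟩ψ`. The hypothesis `⟨C⟩φ` itself serves
as the condition needed by conditional necessitation. -/
theorem coal_mono (C : Set Agent) (h : Deriv X (a.imp b)) :
    Deriv X ((coal C a).imp (coal C b)) :=
  imp_mp (imp_trans (.cn C a h) (.mg C a b)) (.taut fun v => by simp)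

/-- Goals of the empty coalition can be added to those of any coalition, without A-IA. -/
theorem coal_empty_and {C : Set Agent} (ha : Deriv X (H.imp (coal ∅ a)))
    (hb : Deriv X (H.imp (coal C b))) : Deriv X (H.imp (coal C (a.and b))) := by
  have hab : Deriv X (a.imp (b.imp (a.and b))) := .taut fun v => by
    simp only [evalProp_imp, evalProp_and]
    cases a.evalProp v <;> cases b.evalProp v <;> rfl
  exact imp_mp (imp_trans (imp_trans ha (coal_mono ∅ hab)) (.mg C b _)) hb

theorem coal_and_empty {C : Set Agent} (ha : Deriv X (H.imp (coal C a)))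
    (hb : Deriv X (H.imp (coal ∅ b))) : Deriv X (H.imp (coal C (a.and b))) := by
  refine imp_trans (coal_empty_and hb ha) (coal_mono C (.taut fun v => ?_))
  simp only [evalProp_imp, evalProp_and]
  cases a.evalProp v <;> cases b.evalProp v <;> rfl

/-- Consequences `⟨A_i⟩φ_i` of `H` merge into one for the union of the coalitions, provided that the
coalitions are pairwise disjoint and, in the absence of `I`, at most one of them is nonempty. -/
theorem coal_bigConj {ι : Type} {A : ι → Set Agent} {φ : ι → Formula Agent}
    (h0 : Deriv X (H.imp (coal ∅ top))) (l : List ι)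
    (hl : ∀ i ∈ l, Deriv X (H.imp (coal (A i) (φ i))))
    (hp : l.Pairwise fun i k => A i ∩ A k = ∅ ∧ (P3.I ∉ X → A i = ∅ ∨ A k = ∅)) :
    Deriv X (H.imp (coal (⋃ i ∈ l, A i) (bigConj (l.map φ)))) := by
  induction l with
  | nil => simpa [bigConj] using h0
  | cons i l ih =>
    obtain ⟨hi, hp⟩ := List.pairwise_cons.1 hp
    have hrest := ih (fun k hk => hl k (List.mem_cons_of_mem _ hk)) hp
    have hhead := hl i List.mem_cons_self
    have hU : (⋃ k ∈ i :: l, A k) = A i ∪ ⋃ k ∈ l, A k := by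
      ext x; simp
    rw [hU]
    change Deriv X (H.imp (coal _ ((φ i).and (bigConj (l.map φ)))))
    by_cases hI : P3.I ∈ X
    · refine imp_trans (imp_and hhead hrest) (.ia hI ?_ _ _)
      simp only [Set.inter_iUnion, Set.iUnion_eq_empty]
      exact fun k hk => (hi k hk).1
    · by_cases hA : A i = ∅
      · rw [hA] at hhead ⊢
        rw [Set.empty_union]
        exact coal_empty_and hhead hrest
      · have hE : (⋃ k ∈ l, A k) = ∅ := by
          simp only [Set.iUnion_eq_empty]
          exact fun k hk => ((hi k hk).2 hI).resolve_left hA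
        rw [hE] at hrest ⊢
        rw [Set.union_empty]
        exact coal_and_empty hhead hrest

/-- With A-Det, `⟨AG⟩⋁ l` can be eliminated by cases over the disjuncts in `l`. -/
theorem coal_univ_bigDisj (hD : P3.D ∈ X) {l : List (Formula Agent)}
    (h : ∀ a ∈ l, Deriv X ((coal Set.univ a).imp c)) :
    Deriv X ((coal Set.univ (bigDisj l)).imp c) := by
  induction l with
  | nil =>
    refine conseq₁ (.naaa Set.univ) fun v hv => ?_
    simp_all [bigDisj]
  | cons a l ih =>
    have hrest := ih fun b hb => h b (List.mem_cons_of_mem _ hb)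
    have hd := Deriv.det hD Set.univ a (bigDisj l)
    refine imp_trans hd (conseq₂ (h a List.mem_cons_self) hrest fun v => ?_)
    simp only [evalProp_imp, evalProp_or]
    cases (coal Set.univ a).evalProp v <;> simp +contextual

end Deriv

namespace StdDisj

open Formula

variable {Agent : Type} (d : StdDisj Agent)

/-- The antecedent `⋀_{i∈NI}⟨A_i⟩φ_i` of a standard disjunction. -/
def premise : Formula Agent :=
  bigConj ((List.finRange d.n).map fun i => coal (d.A i) (d.φ i))

/-- The consequent `⋁_{j∈PI}⟨B_j⟩ψ_j` of a standard disjunction. -/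
def conclusion : Formula Agent :=
  bigDisj ((List.finRange (d.m + 1)).map fun j => coal (d.B j) (d.ψ j))

variable {X : Set P3}

theorem premise_imp (i : Fin d.n) : Deriv X (d.premise.imp (coal (d.A i) (d.φ i))) := by
  refine .taut fun v => ?_
  have h := (evalProp_bigConj v (l := (List.finRange d.n).map fun i => coal (d.A i) (d.φ i))).1
  rw [evalProp_imp]
  cases hv : d.premise.evalProp v
  · rfl
  · simpa using h hv _ (List.mem_map.2 ⟨i, List.mem_finRange i, rfl⟩)

theorem imp_conclusion (j : Fin (d.m + 1)) :
    Deriv X ((coal (d.B j) (d.ψ j)).imp d.conclusion) := by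
  refine .taut fun v => ?_
  rw [evalProp_imp]
  cases hv : (coal (d.B j) (d.ψ j)).evalProp v
  · rfl
  · simpa [conclusion] using (evalProp_bigDisj v).2 ⟨_, List.mem_map.2 ⟨j, List.mem_finRange j, rfl⟩, hv⟩

/-- A neat set of premises yields any consequence of its goals, for any coalition containing all the
coalitions involved. -/
theorem premise_imp_coal {N : Finset (Fin d.n)} (hN : d.Neat X N) {C : Set Agent}
    (hC : (⋃ i ∈ N, d.A i) ⊆ C) {χ : Formula Agent}
    (hχ : Deriv X ((bigConj (N.toList.map d.φ)).imp χ)) :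
    Deriv X (d.premise.imp (coal C χ)) := by
  obtain ⟨hdisj, hne, hone⟩ := hN
  have h0 : Deriv X (d.premise.imp (coal ∅ top)) := by
    by_cases hS : P3.S ∈ X
    · exact .conseq₁ (.ser hS ∅) fun v hv => by simp [hv]
    · obtain ⟨i, -⟩ := hne hS
      exact .imp_trans (d.premise_imp i) (.cn _ _ (.taut fun _ => rfl))
  have key := Deriv.coal_bigConj h0 N.toList (fun i _ => d.premise_imp i) <| by
    refine N.nodup_toList.imp_of_mem fun {i k} hi hk hik => ?_
    rw [Finset.mem_toList] at hi hk
    refine ⟨hdisj i hi k hk hik, fun hI => ?_⟩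
    by_contra! hcon
    exact hik (hone hI i hi k hk hcon.1.ne_empty hcon.2.ne_empty)
  simp only [Finset.mem_toList] at key
  exact (key.imp_trans (.mc hC _)).imp_trans (.coal_mono C hχ)

end StdDisj

/-- Upward derivability lemma: if the X-derivability-reduction-condition of a
standard disjunction γ ∨ (⋀_{i∈NI}⟨A_i⟩φ_i → ⋁_{j∈PI}⟨B_j⟩ψ_j) is met, then
the standard disjunction is derivable in XL. -/
theorem upward_derivability {Agent : Type} [Fintype Agent] (X : Set P3)
    (d : StdDisj Agent)
    (h : Deriv X d.γ ∨
      ((P3.D ∉ X → ∃ (N' : Finset (Fin d.n)) (j : Fin (d.m + 1)),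
          d.Neat X N' ∧ (⋃ i ∈ N', d.A i) ⊆ d.B j ∧
          Deriv X ((bigConj (N'.toList.map d.φ)).imp (d.ψ j))) ∧
        (P3.D ∈ X → ∃ (N' : Finset (Fin d.n)) (j : Fin (d.m + 1)),
          d.Neat X N' ∧ (⋃ i ∈ N', d.A i) ⊆ d.B j ∧
          Deriv X ((bigConj (N'.toList.map d.φ)).imp
            ((d.ψ j).or (bigDisj (d.PI0.toList.map d.ψ))))))) :
    Deriv X d.toFormula := by
  rcases h with hγ | ⟨hnD, hD⟩
  · exact hγ.conseq₁ fun v hv => by simp [StdDisj.toFormula, hv]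
  suffices hmain : Deriv X (d.premise.imp d.conclusion) by
    refine hmain.conseq₁ fun v hv => ?_
    change (d.γ.or (d.premise.imp d.conclusion)).evalProp v = true
    rw [Formula.evalProp_or, hv, Bool.or_true]
  by_cases hX : P3.D ∈ X
  · obtain ⟨N, j, hN, hsub, hder⟩ := hD hX
    refine ((d.premise_imp_coal hN hsub hder).imp_trans (.det hX _ _ _)).imp_trans ?_
    have hPI0 : Deriv X ((Formula.coal Set.univ (bigDisj (d.PI0.toList.map d.ψ))).imp
        d.conclusion) := by
      refine .coal_univ_bigDisj hX fun a ha => ?_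
      obtain ⟨k, hk, rfl⟩ := List.mem_map.1 ha
      have hB : d.B k = Set.univ := by simpa [StdDisj.PI0] using hk
      exact hB ▸ d.imp_conclusion k
    refine .conseq₂ (d.imp_conclusion j) hPI0 fun v => ?_
    simp only [Formula.evalProp_imp, Formula.evalProp_or]
    cases (Formula.coal (d.B j) (d.ψ j)).evalProp v <;> simp +contextual
  · obtain ⟨N, j, hN, hsub, hder⟩ := hnD hX
    exact (d.premise_imp_coal hN hsub hder).imp_trans (d.imp_conclusion j)

end CL
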